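/- For every n ≥ 2 and every 1 ≤ i ≤ n−1, α(n+2; 1, 2, …, i−1, i, i+1, i, i+1, i+2, …, n) = α(n+2; 1, 2, …, i−1, i+1, i+1, i, i, i+2, …, n); that is, the evaluation of α at the sequence of length n+2 obtained from (1,…,n) by repeating the pair (i, i+1) equals its evaluation at the sequence obtained from (1,…,n) by replacing the pair (i, i+1) with (i+1, i+1, i, i). -/

import Mathlib

/-- A triangular array of size `n`, encoded as a function `ℕ → ℕ → ℤ` whose
meaningful entries are `a i j` for `1 ≤ j ≤ i ≤ n` (row `i` has entries
`a i 1, …, a i i`), normalized to be `0` outside this region. -/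
def IsTri (n : ℕ) (a : ℕ → ℕ → ℤ) : Prop :=
  ∀ i j, ¬ (1 ≤ j ∧ j ≤ i ∧ i ≤ n) → a i j = 0

/-- A Monotone Triangle of size `n`: strict increase along rows and weak
increase along North-East and South-East diagonals. -/
def IsMT (n : ℕ) (a : ℕ → ℕ → ℤ) : Prop :=
  IsTri n a ∧
  (∀ i j, 1 ≤ j → j + 1 ≤ i → i ≤ n → a i j < a i (j + 1)) ∧
  (∀ i j, 1 ≤ j → j ≤ i → i + 1 ≤ n →
    a (i + 1) j ≤ a i j ∧ a i j ≤ a (i + 1) (j + 1))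

/-- A Generalized Monotone Triangle (GMT) of size `n`. -/
def IsGMT (n : ℕ) (a : ℕ → ℕ → ℤ) : Prop :=
  IsTri n a ∧
  -- (1) each entry is weakly bounded by its SW- and SE-neighbour
  (∀ i j, 1 ≤ j → j ≤ i → i + 1 ≤ n →
    min (a (i + 1) j) (a (i + 1) (j + 1)) ≤ a i j ∧
    a i j ≤ max (a (i + 1) j) (a (i + 1) (j + 1))) ∧
  -- (2) three weakly increasing consecutive entries force strict increase above
  (∀ i j, 1 ≤ j → j + 1 ≤ i → i + 1 ≤ n →
    a (i + 1) j ≤ a (i + 1) (j + 1) → a (i + 1) (j + 1) ≤ a (i + 1) (j + 2) →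
    a i j < a i (j + 1)) ∧
  -- (3) equality over a strict descent forces an equal neighbour
  (∀ i j, 1 ≤ j → j ≤ i → i + 1 ≤ n →
    (a i j = a (i + 1) j → a (i + 1) (j + 1) < a (i + 1) j →
      2 ≤ j ∧ a i (j - 1) = a i j) ∧
    (a (i + 1) (j + 1) < a (i + 1) j → a (i + 1) (j + 1) = a i j →
      j + 1 ≤ i ∧ a i (j + 1) = a i j))

/-- The bottom row of a triangular array of size `n` is `(k 0, …, k (n-1))`
(1-indexed in the array). -/
def BottomRow (n : ℕ) (a : ℕ → ℕ → ℤ) (k : Fin n → ℤ) : Prop :=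
  ∀ j : Fin n, a n (j.1 + 1) = k j

/-- The set of Monotone Triangles of size `n` with bottom row `k`. -/
def MTset (n : ℕ) (k : Fin n → ℤ) : Set (ℕ → ℕ → ℤ) :=
  {a | IsMT n a ∧ BottomRow n a k}

/-- The set `𝒢ₙ(k)` of Generalized Monotone Triangles of size `n` with bottom row `k`. -/
def GMTset (n : ℕ) (k : Fin n → ℤ) : Set (ℕ → ℕ → ℤ) :=
  {a | IsGMT n a ∧ BottomRow n a k}

/-- The positions `(i, j)` of newcomers of a triangular array:
`a (i+1) j > a i j > a (i+1) (j+1)`. -/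
def newcomersF (n : ℕ) (a : ℕ → ℕ → ℤ) : Finset (ℕ × ℕ) :=
  ((Finset.range (n + 1)) ×ˢ (Finset.range (n + 1))).filter (fun p =>
    1 ≤ p.2 ∧ p.2 ≤ p.1 ∧ p.1 + 1 ≤ n ∧
    a p.1 p.2 < a (p.1 + 1) p.2 ∧ a (p.1 + 1) (p.2 + 1) < a p.1 p.2)

/-- The positions `(i, j)` of sign-changing pairs `(a i j, a i (j+1))` of a
triangular array: two equal consecutive entries whose interlaced neighbour
below is also equal to them. -/
def scPairsF (n : ℕ) (a : ℕ → ℕ → ℤ) : Finset (ℕ × ℕ) :=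
  ((Finset.range (n + 1)) ×ˢ (Finset.range (n + 1))).filter (fun p =>
    1 ≤ p.2 ∧ p.2 + 1 ≤ p.1 ∧ p.1 + 1 ≤ n ∧
    a p.1 p.2 = a p.1 (p.2 + 1) ∧ a (p.1 + 1) (p.2 + 1) = a p.1 p.2)

/-- `sc(A)`: the total number of newcomers and sign-changing pairs of `A`. -/
def scT (n : ℕ) (a : ℕ → ℕ → ℤ) : ℕ :=
  (newcomersF n a).card + (scPairsF n a).card

/-- `IsAlpha N f` asserts that `f` is the polynomial function
`α(N; k₁, …, k_N)`: it is given by a polynomial with rational coefficients of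
degree at most `N - 1` in each variable, and its value at every strictly
increasing integer sequence equals the number of Monotone Triangles with that
bottom row. -/
def IsAlpha (N : ℕ) (f : (Fin N → ℤ) → ℚ) : Prop :=
  (∃ P : MvPolynomial (Fin N) ℚ, (∀ i : Fin N, P.degreeOf i ≤ N - 1) ∧
    ∀ k : Fin N → ℤ, f k = MvPolynomial.eval (fun i => (k i : ℚ)) P) ∧
  (∀ k : Fin N → ℤ, StrictMono k → f k = ((MTset N k).ncard : ℚ))

/-!
A monotone triangle can be counted for a bottom row that increases only weakly, and this count is a
polynomial in the row. Inductively, it is the sum of a polynomial over the strictly increasing rows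
interlacing the given one; as that polynomial vanishes at three equal consecutive entries,
inclusion-exclusion over equal neighbours turns this into iterated sums over integer intervals. So
`α` is the count at all weakly increasing rows.

For the count, `…, y, y + 1, …` gives the sum of the values at `…, y, y, …` and
`…, y + 1, y + 1, …`, while rows containing `y, y, y` or `y, y, y + 1, y + 1` give zero. Being
polynomial in `y` and the remaining entries, these identities hold for `α` at all rows, increasing
or not. Splitting both pairs of `y, y + 1, y, y + 1` leaves four terms, of which only
`y + 1, y + 1, y, y` survives.
-/

open Finset Function

/-! ### Weakly increasing bottom rows -/

theorem exists_castSucc_eq_succ_eq_of_covBy {n : ℕ} {a b : Fin (n + 1)} (h : a ⋖ b) :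
    ∃ i : Fin n, i.castSucc = a ∧ i.succ = b := by
  have hab : (a : ℕ) + 1 = b := Order.covBy_iff_add_one_eq.1 (Fin.covBy_iff.1 h)
  exact ⟨⟨a, by omega⟩, rfl, Fin.ext hab⟩

open Classical in
/-- The strictly increasing rows that may stand directly above `k` in a monotone triangle. -/
noncomputable def rowsAbove {n : ℕ} (k : Fin (n + 1) → ℤ) : Finset (Fin n → ℤ) :=
  {l ∈ Icc (Fin.init k) (Fin.tail k) | StrictMono l}

theorem mem_rowsAbove {n : ℕ} {k : Fin (n + 1) → ℤ} {l : Fin n → ℤ} :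
    l ∈ rowsAbove k ↔ (∀ i, k i.castSucc ≤ l i ∧ l i ≤ k i.succ) ∧ StrictMono l := by
  simp only [rowsAbove, mem_filter, mem_Icc, Pi.le_def, Fin.init, Fin.tail, forall_and]

/-- The number of monotone triangles with bottom row `k`, where `k` itself, unlike the rows above
it, need not be strictly increasing. -/
noncomputable def weakCount : {n : ℕ} → (Fin n → ℤ) → ℕ
  | 0, _ => 1
  | _ + 1, k => ∑ l ∈ rowsAbove k, weakCount l

theorem weakCount_eq_zero_of_triple {n : ℕ} {k : Fin n → ℤ} {a b c : Fin n}
    (hab : a ⋖ b) (hbc : b ⋖ c) (h₁ : k b = k a) (h₂ : k c = k a) : weakCount k = 0 := by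
  cases n with
  | zero => exact a.elim0
  | succ n =>
    obtain ⟨i, rfl, rfl⟩ := exists_castSucc_eq_succ_eq_of_covBy hab
    obtain ⟨j, hj, rfl⟩ := exists_castSucc_eq_succ_eq_of_covBy hbc
    have hij : i < j := by rw [← Fin.succ_le_castSucc_iff, hj]
    refine sum_eq_zero fun l hl => ?_
    rw [mem_rowsAbove] at hl
    linarith [hl.1 i, hl.1 j, hl.2 hij]

theorem weakCount_eq_zero_of_pairs {n : ℕ} {k : Fin n → ℤ} {a b c d : Fin n}
    (hab : a ⋖ b) (hbc : b ⋖ c) (hcd : c ⋖ d)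
    (h₁ : k b = k a) (h₂ : k c = k a + 1) (h₃ : k d = k a + 1) : weakCount k = 0 := by
  cases n with
  | zero => exact a.elim0
  | succ n =>
    obtain ⟨i, rfl, rfl⟩ := exists_castSucc_eq_succ_eq_of_covBy hab
    obtain ⟨j, hj, rfl⟩ := exists_castSucc_eq_succ_eq_of_covBy hbc
    obtain ⟨m, hm, rfl⟩ := exists_castSucc_eq_succ_eq_of_covBy hcd
    have hij : i < j := by rw [← Fin.succ_le_castSucc_iff, hj]
    have hjm : j < m := by rw [← Fin.succ_le_castSucc_iff, hm]
    refine sum_eq_zero fun l hl => ?_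
    rw [mem_rowsAbove] at hl
    linarith [hl.1 i, hl.1 m, Int.add_one_le_iff.2 (hl.2 hij), Int.add_one_le_iff.2 (hl.2 hjm)]

section Split

variable {n : ℕ} {k : Fin (n + 1) → ℤ} {i : Fin n} {l : Fin n → ℤ}

theorem mem_rowsAbove_update_succ (hk : k i.succ = k i.castSucc + 1) :
    l ∈ rowsAbove (update k i.succ (k i.castSucc)) ↔ l ∈ rowsAbove k ∧ l i = k i.castSucc := by
  simp only [mem_rowsAbove, update_apply, Fin.succ_inj]
  have hne : i.castSucc ≠ i.succ := i.castSucc_lt_succ.ne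
  refine ⟨fun ⟨h, hs⟩ => ?_, fun ⟨⟨_, hs⟩, _⟩ => ⟨fun j => ?_, hs⟩⟩
  · have hi : l i = k i.castSucc := by have := h i; simp only [hne] at this; grind
    refine ⟨⟨fun j => ?_, hs⟩, hi⟩
    have hij : j.castSucc = i.succ → l i < l j := fun hj =>
      hs (Fin.succ_le_castSucc_iff.1 hj.ge)
    grind
  · grind

theorem mem_rowsAbove_update_castSucc (hk : k i.succ = k i.castSucc + 1) :
    l ∈ rowsAbove (update k i.castSucc (k i.succ)) ↔ l ∈ rowsAbove k ∧ l i = k i.succ := by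
  simp only [mem_rowsAbove, update_apply, Fin.castSucc_inj]
  have hne : i.succ ≠ i.castSucc := i.castSucc_lt_succ.ne'
  refine ⟨fun ⟨h, hs⟩ => ?_, fun ⟨⟨_, hs⟩, _⟩ => ⟨fun j => ?_, hs⟩⟩
  · have hi : l i = k i.succ := by have := h i; simp only [hne] at this; grind
    refine ⟨⟨fun j => ?_, hs⟩, hi⟩
    have hij : j.succ = i.castSucc → l j < l i := fun hj =>
      hs (Fin.succ_le_castSucc_iff.1 hj.le)
    grind
  · grind

end Split

/-- The entry above two adjacent entries `y, y + 1` is one of them; when it is `y`, strictness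
makes lowering `y + 1` to `y` harmless, and when it is `y + 1`, raising `y` is. -/
theorem weakCount_eq_add_of_step {n : ℕ} {k : Fin n → ℤ} {a b : Fin n} (hab : a ⋖ b)
    (hk : k b = k a + 1) :
    weakCount k = weakCount (update k b (k a)) + weakCount (update k a (k b)) := by
  classical
  cases n with
  | zero => exact a.elim0
  | succ n =>
    obtain ⟨i, rfl, rfl⟩ := exists_castSucc_eq_succ_eq_of_covBy hab
    have hlow : rowsAbove (update k i.succ (k i.castSucc)) =
        {l ∈ rowsAbove k | l i = k i.castSucc} := by
      ext l
      rw [mem_filter, mem_rowsAbove_update_succ hk]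
    have hhigh : rowsAbove (update k i.castSucc (k i.succ)) =
        {l ∈ rowsAbove k | ¬ l i = k i.castSucc} := by
      ext l
      rw [mem_filter, mem_rowsAbove_update_castSucc hk]
      refine and_congr_right fun hl => ?_
      have := (mem_rowsAbove.1 hl).1 i
      omega
    simp only [weakCount]
    rw [hlow, hhigh, sum_filter_add_sum_filter_not]

/-- The triangular array `a` of size `n` extended by `k` as row `n + 1`. -/
def appendRow {n : ℕ} (k : Fin (n + 1) → ℤ) (a : ℕ → ℕ → ℤ) : ℕ → ℕ → ℤ := fun i j =>
  if i = n + 1 then if h : 1 ≤ j ∧ j ≤ n + 1 then k ⟨j - 1, by omega⟩ else 0 else a i j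

theorem appendRow_injOn {n : ℕ} (k : Fin (n + 1) → ℤ) :
    Set.InjOn (appendRow k) {a | IsTri n a} := by
  intro a ha b hb h
  funext i j
  rcases eq_or_ne i (n + 1) with rfl | hi
  · rw [ha _ _ (by omega), hb _ _ (by omega)]
  · simpa [appendRow, hi] using congrFun₂ h i j

theorem appendRow_mem_MTset {n : ℕ} {k : Fin (n + 1) → ℤ} (hk : StrictMono k) {l : Fin n → ℤ}
    (hl : l ∈ rowsAbove k) {a : ℕ → ℕ → ℤ} (ha : a ∈ MTset n l) :
    appendRow k a ∈ MTset (n + 1) k := by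
  obtain ⟨⟨htri, hrow, hdiag⟩, hbot⟩ := ha
  refine ⟨⟨fun i j hij => ?_, fun i j hj hji hi => ?_, fun i j hj hji hi => ?_⟩, fun j => ?_⟩
  · have := htri i j
    grind [appendRow]
  · rcases eq_or_ne i (n + 1) with rfl | hne
    · have : k ⟨j - 1, by omega⟩ < k ⟨j, by omega⟩ := hk (Fin.mk_lt_mk.2 (by omega))
      grind [appendRow]
    · simpa [appendRow, hne] using hrow i j hj hji (by omega)
  · rcases eq_or_ne i n with rfl | hne
    · have hinter := (mem_rowsAbove.1 hl).1 ⟨j - 1, by omega⟩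
      have hentry := hbot ⟨j - 1, by omega⟩
      simp only [Fin.castSucc_mk, Fin.succ_mk] at hinter
      grind [appendRow]
    · have := hdiag i j hj hji (by omega)
      grind [appendRow]
  · simp [appendRow, Nat.lt_succ_iff.1 j.2]

theorem exists_appendRow_eq_of_mem_MTset {n : ℕ} {k : Fin (n + 1) → ℤ} {a : ℕ → ℕ → ℤ}
    (ha : a ∈ MTset (n + 1) k) : ∃ l ∈ rowsAbove k, ∃ b ∈ MTset n l, appendRow k b = a := by
  obtain ⟨⟨htri, hrow, hdiag⟩, hbot⟩ := ha
  refine ⟨fun j => a n (j + 1), mem_rowsAbove.2 ⟨fun j => ?_, ?_⟩,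
    fun i j => if i = n + 1 then 0 else a i j, ⟨⟨?_, ?_, ?_⟩, fun j => ?_⟩, ?_⟩
  · have := hdiag n (j + 1) (by omega) (by omega) le_rfl
    rw [← hbot, ← hbot]
    exact this
  · refine strictMono_iff_forall_covBy _ |>.2 fun i j hij => ?_
    have hij : (i : ℕ) + 1 = j := Order.covBy_iff_add_one_eq.1 (Fin.covBy_iff.1 hij)
    rw [← hij]
    exact hrow n (i + 1) (by omega) (by omega) (by omega)
  · intro i j
    have := htri i j
    grind
  · intro i j
    have := hrow i j
    grind
  · intro i j
    have := hdiag i j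
    grind
  · simp
  · funext i j
    have := htri i j
    have : ∀ h : j - 1 < n + 1, a (n + 1) (j - 1 + 1) = k ⟨j - 1, h⟩ := fun h => hbot ⟨j - 1, h⟩
    grind [appendRow]

theorem MTset_succ {n : ℕ} {k : Fin (n + 1) → ℤ} (hk : StrictMono k) :
    MTset (n + 1) k = ⋃ l ∈ (rowsAbove k : Set (Fin n → ℤ)), appendRow k '' MTset n l := by
  ext a
  simp only [Set.mem_iUnion, exists_prop]
  constructor
  · exact exists_appendRow_eq_of_mem_MTset
  · rintro ⟨l, hl, b, hb, rfl⟩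
    exact appendRow_mem_MTset hk hl hb

theorem pairwiseDisjoint_appendRow_image_MTset {n : ℕ} (k : Fin (n + 1) → ℤ)
    (s : Set (Fin n → ℤ)) : s.PairwiseDisjoint fun l => appendRow k '' MTset n l := by
  rintro l - m - hlm
  refine Set.disjoint_left.2 ?_
  rintro _ ⟨a, ha, rfl⟩ ⟨b, hb, hab⟩
  obtain rfl := appendRow_injOn k hb.1.1 ha.1.1 hab
  exact hlm (funext fun j => (ha.2 j).symm.trans (hb.2 j))

theorem MTset_zero (k : Fin 0 → ℤ) : MTset 0 k = {0} := by
  ext a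
  simp only [MTset, IsMT, IsTri, BottomRow, Set.mem_ofPred_eq, Set.mem_singleton_iff]
  constructor
  · rintro ⟨⟨h, -⟩, -⟩
    exact funext₂ fun i j => h i j (by omega)
  · rintro rfl
    exact ⟨⟨fun _ _ _ => rfl, by omega, by omega⟩, fun j => j.elim0⟩

theorem encard_MTset {n : ℕ} {k : Fin n → ℤ} (hk : StrictMono k) :
    (MTset n k).encard = weakCount k := by
  induction n with
  | zero => simp [MTset_zero, weakCount]
  | succ n ih =>
    rw [MTset_succ hk, (finite_toSet _).encard_biUnion
      (pairwiseDisjoint_appendRow_image_MTset k _), finsum_mem_coe_finset, weakCount,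
      Nat.cast_sum]
    refine sum_congr rfl fun l hl => ?_
    rw [((appendRow_injOn k).mono fun a ha => ha.1.1).encard_image, ih (mem_rowsAbove.1 hl).2]

/-! ### Polynomial functions of integer sequences -/

/-- The functions on integer sequences that are given by a polynomial with rational
coefficients. -/
noncomputable def polyFun (σ : Type*) : Subalgebra ℚ ((σ → ℤ) → ℚ) :=
  (MvPolynomial.aeval fun i k => (k i : ℚ)).range

section PolyFun

variable {σ τ : Type*}

theorem mem_polyFun_iff {f : (σ → ℤ) → ℚ} :
    f ∈ polyFun σ ↔
      ∃ P : MvPolynomial σ ℚ, ∀ k, f k = MvPolynomial.eval (fun i => (k i : ℚ)) P := by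
  have aeval_apply (P : MvPolynomial σ ℚ) (k : σ → ℤ) :
      MvPolynomial.aeval (fun i (k : σ → ℤ) => (k i : ℚ)) P k =
        MvPolynomial.eval (fun i => (k i : ℚ)) P := by
    induction P using MvPolynomial.induction_on with
    | C a => simp
    | add p q hp hq => simp [hp, hq]
    | mul_X p i hp => simp [hp]
  simp only [polyFun, AlgHom.mem_range, funext_iff, aeval_apply, eq_comm]

theorem coord_mem_polyFun (i : σ) : (fun k => (k i : ℚ)) ∈ polyFun σ :=
  ⟨MvPolynomial.X i, MvPolynomial.aeval_X _ i⟩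

theorem coord_add_one_mem_polyFun (i : σ) : (fun k => ((k i + 1 : ℤ) : ℚ)) ∈ polyFun σ := by
  push_cast
  exact add_mem (coord_mem_polyFun i) (one_mem _)

theorem comp_mem_polyFun {f : (σ → ℤ) → ℚ} (hf : f ∈ polyFun σ) {u : (τ → ℤ) → σ → ℤ}
    (hu : ∀ i, (fun k => (u k i : ℚ)) ∈ polyFun τ) : (fun k => f (u k)) ∈ polyFun τ := by
  obtain ⟨P, hP⟩ := mem_polyFun_iff.1 hf
  simp only [hP]
  clear hP
  induction P using MvPolynomial.induction_on with
  | C a =>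
    simp only [MvPolynomial.eval_C]
    exact (polyFun τ).algebraMap_mem a
  | add p q hp hq =>
    simp only [map_add]
    exact add_mem hp hq
  | mul_X p i hp =>
    simp only [map_mul, MvPolynomial.eval_X]
    exact mul_mem hp (hu i)

theorem update_mem_polyFun [DecidableEq σ] {u : (τ → ℤ) → σ → ℤ}
    (hu : ∀ i, (fun k => (u k i : ℚ)) ∈ polyFun τ) (j : σ) {v : (τ → ℤ) → ℤ}
    (hv : (fun k => (v k : ℚ)) ∈ polyFun τ) (i : σ) :
    (fun k => (update (u k) j (v k) i : ℚ)) ∈ polyFun τ := by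
  rcases eq_or_ne i j with rfl | hij
  · simpa only [update_self] using hv
  · simpa only [update_of_ne hij] using hu i

theorem polynomial_eval_mem_polyFun (q : Polynomial ℚ) {f : (σ → ℤ) → ℚ} (hf : f ∈ polyFun σ) :
    (fun k => q.eval (f k)) ∈ polyFun σ := by
  convert Algebra.adjoin_le (Set.singleton_subset_iff.2 hf) (q.aeval_mem_adjoin_singleton ℚ f)
  rw [Polynomial.aeval_fn_apply, Polynomial.coe_aeval_eq_eval]

theorem eq_of_mem_polyFun_of_forall_strictMono {n : ℕ} {f g : (Fin n → ℤ) → ℚ}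
    (hf : f ∈ polyFun (Fin n)) (hg : g ∈ polyFun (Fin n)) (h : ∀ k, StrictMono k → f k = g k) :
    f = g := by
  obtain ⟨P, hP⟩ := mem_polyFun_iff.1 (sub_mem hf hg)
  -- Every choice of one point from each of these consecutive blocks is strictly increasing.
  set D : ℕ := P.totalDegree + 1
  set S : Fin n → Finset ℤ := fun i => Ico (i * D : ℤ) (i * D + D)
  have strictMono_of_mem {t : Fin n → ℤ} (ht : ∀ i, t i ∈ S i) : StrictMono t := fun i j hij => by
    have hi := (mem_Ico.1 (ht i)).2
    have hj := (mem_Ico.1 (ht j)).1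
    have hij : ((i : ℤ) + 1) * D ≤ j * D := by gcongr; exact_mod_cast hij
    linarith
  have hP0 : P = 0 := by
    refine MvPolynomial.eq_zero_of_eval_zero_at_prod_finset P
      (fun i => (S i).map ⟨Int.cast, Int.cast_injective⟩) (fun i => ?_) fun x hx => ?_
    · simpa [S, D, Nat.lt_succ_iff] using P.degreeOf_le_totalDegree i
    · choose t ht htx using fun i => mem_map.1 (hx i)
      obtain rfl : (fun i => (t i : ℚ)) = x := funext htx
      rw [← hP, Pi.sub_apply, h t (strictMono_of_mem ht), sub_self]
  funext k
  simpa [hP0, sub_eq_zero] using hP k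

theorem eq_zero_of_forall_strictMono {n : ℕ} {f : (σ → ℤ) → ℚ} (hf : f ∈ polyFun σ)
    {u : (Fin n → ℤ) → σ → ℤ} (hu : ∀ i, (fun k => (u k i : ℚ)) ∈ polyFun (Fin n))
    (h : ∀ k, StrictMono k → f (u k) = 0) (k : Fin n → ℤ) : f (u k) = 0 :=
  congrFun (eq_of_mem_polyFun_of_forall_strictMono (comp_mem_polyFun hf hu) (zero_mem _) h) k

end PolyFun

theorem exists_polynomial_sum_Ico_pow_eq (e : ℕ) : ∃ q : Polynomial ℚ, ∀ a b : ℤ, a ≤ b →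
    ∑ x ∈ Ico a b, (x : ℚ) ^ e = q.eval (b : ℚ) - q.eval (a : ℚ) := by
  refine ⟨Polynomial.C ((e : ℚ) + 1)⁻¹ * Polynomial.bernoulli (e + 1), fun a b hab => ?_⟩
  induction b, hab using Int.leInduction with
  | base => simp
  | succ b hab ih =>
    have he : (e : ℚ) + 1 ≠ 0 := by positivity
    have hB := Polynomial.bernoulli_eval_one_add (e + 1) (b : ℚ)
    rw [← insert_Ico_right_eq_Ico_add_one hab, sum_insert right_notMem_Ico, ih]
    simp only [Polynomial.eval_mul, Polynomial.eval_C, Int.cast_add, Int.cast_one,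
      add_comm (b : ℚ) 1, hB, Nat.cast_add, Nat.cast_one, add_tsub_cancel_right]
    field_simp
    ring

/-! ### Fischer's summation operator -/

/-- Fischer's summation operator: the alternating sum of `f` over the `l` interlacing `k` by which
inclusion-exclusion removes those `l` with equal neighbours, two equal neighbours being forced to
equal the entry of `k` between them. -/
noncomputable def interlaceSum : (n : ℕ) → (Fin (n + 1) → ℤ) → ((Fin n → ℤ) → ℚ) →ₗ[ℚ] ℚ
  | 0, _ => LinearMap.proj ![]
  | 1, k => ∑ x ∈ Icc (k 0) (k 1), LinearMap.proj ![x]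
  | n + 2, k =>
    ∑ x ∈ Icc (k 0) (k 1),
        interlaceSum (n + 1) (Fin.tail k) ∘ₗ LinearMap.funLeft ℚ ℚ (fun l => Fin.cons x l) -
      interlaceSum n (Fin.tail (Fin.tail k)) ∘ₗ
        LinearMap.funLeft ℚ ℚ fun l => Fin.cons (k 1) (Fin.cons (k 1) l : Fin (n + 1) → ℤ)

theorem interlaceSum_add_two (n : ℕ) (k : Fin (n + 3) → ℤ) (f : (Fin (n + 2) → ℤ) → ℚ) :
    interlaceSum (n + 2) k f =
      ∑ x ∈ Icc (k 0) (k 1), interlaceSum (n + 1) (Fin.tail k) (fun l => f (Fin.cons x l)) -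
        interlaceSum n (Fin.tail (Fin.tail k))
          fun l => f (Fin.cons (k 1) (Fin.cons (k 1) l : Fin (n + 1) → ℤ)) := by
  simp only [interlaceSum, LinearMap.sub_apply, LinearMap.sum_apply]
  rfl

/-- `f` vanishes at all sequences with three equal consecutive entries. -/
def VanishesOnTriples {n : ℕ} (f : (Fin n → ℤ) → ℚ) : Prop :=
  ∀ ⦃a b c : Fin n⦄, a ⋖ b → b ⋖ c → ∀ ⦃k⦄, k b = k a → k c = k a → f k = 0

theorem VanishesOnTriples.comp_cons {n : ℕ} {f : (Fin (n + 1) → ℤ) → ℚ}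
    (hf : VanishesOnTriples f) (x : ℤ) : VanishesOnTriples fun l => f (Fin.cons x l) := by
  intro a b c hab hbc k h₁ h₂
  refine hf (a := a.succ) (b := b.succ) (c := c.succ) ?_ ?_ ?_ ?_
  · simpa using hab
  · simpa using hbc
  · simpa using h₁
  · simpa using h₂

theorem cons_mem_rowsAbove {n : ℕ} {k : Fin (n + 2) → ℤ} {x : ℤ} {l : Fin n → ℤ} :
    (Fin.cons x l : Fin (n + 1) → ℤ) ∈ rowsAbove k ↔
      x ∈ Icc (k 0) (k 1) ∧ l ∈ rowsAbove (Fin.tail k) ∧ ∀ j, x < l j := by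
  simp only [mem_rowsAbove, Fin.forall_fin_succ (n := n), Fin.strictMono_cons, Fin.cons_zero,
    Fin.cons_succ, mem_Icc, Fin.tail, Fin.castSucc_zero, Fin.succ_zero_eq_one, Fin.castSucc_succ]
  tauto

theorem sum_rowsAbove_succ {n : ℕ} (k : Fin (n + 2) → ℤ) (f : (Fin (n + 1) → ℤ) → ℚ) :
    ∑ l ∈ rowsAbove k, f l = ∑ x ∈ Icc (k 0) (k 1), ∑ l ∈ rowsAbove (Fin.tail k) with ∀ j, x < l j,
      f (Fin.cons x l) := by
  rw [sum_sigma']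
  refine sum_bij' (fun l _ => ⟨l 0, Fin.tail l⟩) (fun p _ => Fin.cons p.1 p.2) ?_ ?_ ?_ ?_ ?_
  · intro l hl
    rw [← Fin.cons_self_tail l, cons_mem_rowsAbove] at hl
    simpa using hl
  · intro p hp
    rw [cons_mem_rowsAbove]
    simpa using hp
  · intro l _
    exact Fin.cons_self_tail l
  · intro p _
    simp
  · intro l _
    rw [Fin.cons_self_tail]

section Ties

variable {n : ℕ} {k : Fin (n + 3) → ℤ}

theorem not_forall_lt_iff_of_mem_rowsAbove_tail {x : ℤ} (hx : x ∈ Icc (k 0) (k 1))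
    {l : Fin (n + 1) → ℤ} (hl : l ∈ rowsAbove (Fin.tail k)) :
    (¬ ∀ j, x < l j) ↔ x = k 1 ∧ l 0 = k 1 := by
  rw [mem_rowsAbove] at hl
  have hx := (mem_Icc.1 hx).2
  have hl0 : k 1 ≤ l 0 := (hl.1 0).1
  constructor
  · intro h
    push Not at h
    obtain ⟨j, hj⟩ := h
    have := hl.2.monotone (Fin.zero_le j)
    omega
  · rintro ⟨rfl, h⟩ hlt
    exact (hlt 0).ne' h

theorem forall_lt_of_cons_cons_ne_zero {f : (Fin (n + 2) → ℤ) → ℚ} (hf : VanishesOnTriples f)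
    (h12 : k 1 ≤ k 2) {l : Fin n → ℤ} (hl : l ∈ rowsAbove (Fin.tail (Fin.tail k)))
    (hne : f (Fin.cons (k 1) (Fin.cons (k 1) l : Fin (n + 1) → ℤ)) ≠ 0) (j : Fin n) :
    k 1 < l j := by
  by_contra! hj
  obtain ⟨m, rfl⟩ := Nat.exists_eq_add_one.2 j.pos
  rw [mem_rowsAbove] at hl
  have hl0 : k 2 ≤ l 0 := (hl.1 0).1
  have hlj : l 0 ≤ l j := hl.2.monotone (Fin.zero_le j)
  have covBy_one : (0 : Fin (m + 3)) ⋖ Fin.succ 0 := Fin.covBy_iff.2 (Order.covBy_add_one 0)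
  have covBy_two : (Fin.succ 0 : Fin (m + 3)) ⋖ Fin.succ (Fin.succ 0) :=
    Fin.covBy_iff.2 (Order.covBy_add_one 1)
  exact hne (hf covBy_one covBy_two rfl (show l 0 = k 1 by omega))

theorem sum_rowsAbove_tail_ties {f : (Fin (n + 2) → ℤ) → ℚ} (hf : VanishesOnTriples f)
    (hk : Monotone k) :
    ∑ x ∈ Icc (k 0) (k 1), ∑ l ∈ rowsAbove (Fin.tail k) with ¬ ∀ j, x < l j, f (Fin.cons x l) =
      ∑ l ∈ rowsAbove (Fin.tail (Fin.tail k)),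
        f (Fin.cons (k 1) (Fin.cons (k 1) l : Fin (n + 1) → ℤ)) := by
  have h01 : k 0 ≤ k 1 := hk (Fin.zero_le 1)
  have h12 : Fin.tail k 0 ≤ Fin.tail k 1 := hk (Fin.succ_le_succ_iff.2 (Fin.zero_le 1))
  have hties : ∀ x ∈ Icc (k 0) (k 1),
      ∑ l ∈ rowsAbove (Fin.tail k) with ¬ ∀ j, x < l j, f (Fin.cons x l) =
        if x = k 1 then ∑ l ∈ rowsAbove (Fin.tail k) with l 0 = k 1, f (Fin.cons x l) else 0 := by
    intro x hx
    rw [filter_congr fun l hl => not_forall_lt_iff_of_mem_rowsAbove_tail hx hl]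
    split_ifs with h <;> simp [h]
  rw [sum_congr rfl hties, sum_ite_eq', if_pos (right_mem_Icc.2 h01), sum_filter,
    sum_rowsAbove_succ, sum_eq_single_of_mem (Fin.tail k 0) (left_mem_Icc.2 h12)]
  · simp only [Fin.cons_zero, Fin.tail, Fin.succ_zero_eq_one, if_true]
    exact sum_filter_of_ne fun l hl => forall_lt_of_cons_cons_ne_zero hf h12 hl
  · intro y _ hy
    rw [Fin.tail, Fin.succ_zero_eq_one] at hy
    simp [hy]

theorem sum_rowsAbove_add_two {f : (Fin (n + 2) → ℤ) → ℚ} (hf : VanishesOnTriples f)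
    (hk : Monotone k) :
    ∑ l ∈ rowsAbove k, f l =
      ∑ x ∈ Icc (k 0) (k 1), ∑ l ∈ rowsAbove (Fin.tail k), f (Fin.cons x l) -
        ∑ l ∈ rowsAbove (Fin.tail (Fin.tail k)),
          f (Fin.cons (k 1) (Fin.cons (k 1) l : Fin (n + 1) → ℤ)) := by
  rw [sum_rowsAbove_succ, eq_sub_iff_add_eq, ← sum_rowsAbove_tail_ties hf hk, ← sum_add_distrib]
  exact sum_congr rfl fun x _ => sum_filter_add_sum_filter_not _ _ _

end Ties

theorem monotone_tail {n : ℕ} {k : Fin (n + 1) → ℤ} (hk : Monotone k) :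
    Monotone (Fin.tail k) :=
  hk.comp Fin.strictMono_succ.monotone

theorem sum_rowsAbove_eq_interlaceSum {n : ℕ} {k : Fin (n + 1) → ℤ} (hk : Monotone k)
    {f : (Fin n → ℤ) → ℚ} (hf : VanishesOnTriples f) :
    ∑ l ∈ rowsAbove k, f l = interlaceSum n k f := by
  have rowsAbove_zero (k : Fin 1 → ℤ) : rowsAbove k = {![]} := by
    ext l
    simp [mem_rowsAbove, Subsingleton.elim l ![], Subsingleton.strictMono]
  induction n using Nat.twoStepInduction with
  | zero => simp [rowsAbove_zero, interlaceSum]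
  | one => simp [sum_rowsAbove_succ, rowsAbove_zero, interlaceSum]
  | more n ih₁ ih₂ =>
    rw [sum_rowsAbove_add_two hf hk, interlaceSum_add_two,
      ih₁ (monotone_tail (monotone_tail hk)) ((hf.comp_cons _).comp_cons _)]
    simp only [ih₂ (monotone_tail hk) (hf.comp_cons _)]

theorem interlaceSum_prod_add_two (n : ℕ) (k : Fin (n + 3) → ℤ) (f : Fin (n + 2) → ℤ → ℚ) :
    interlaceSum (n + 2) k (fun l => ∏ j, f j (l j)) =
      (∑ x ∈ Icc (k 0) (k 1), f 0 x) *
          interlaceSum (n + 1) (Fin.tail k) (fun l => ∏ j, f j.succ (l j)) -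
        f 0 (k 1) * f 1 (k 1) *
          interlaceSum n (Fin.tail (Fin.tail k)) (fun l => ∏ j, f j.succ.succ (l j)) := by
  have interlaceSum_mul {m : ℕ} (k : Fin (m + 1) → ℤ) (c : ℚ) (g : (Fin m → ℤ) → ℚ) :
      interlaceSum m k (fun l => c * g l) = c * interlaceSum m k g :=
    (interlaceSum m k).map_smul c g
  rw [interlaceSum_add_two, sum_mul]
  simp only [Fin.prod_univ_succ (n := n + 1), Fin.cons_zero, Fin.cons_succ, interlaceSum_mul]
  simp only [Fin.prod_univ_succ (n := n), Fin.cons_zero, Fin.cons_succ, interlaceSum_mul,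
    mul_assoc, Fin.succ_zero_eq_one]

theorem exists_mem_polyFun_sum_Icc_pow_eq {σ : Type*} (i j : σ) (e : ℕ) :
    ∃ g ∈ polyFun σ, ∀ k : σ → ℤ, k i ≤ k j → ∑ x ∈ Icc (k i) (k j), (x : ℚ) ^ e = g k := by
  obtain ⟨q, hq⟩ := exists_polynomial_sum_Ico_pow_eq e
  refine ⟨_, sub_mem
    (polynomial_eval_mem_polyFun q (add_mem (coord_mem_polyFun j) (one_mem _)))
    (polynomial_eval_mem_polyFun q (coord_mem_polyFun i)), fun k hk => ?_⟩
  rw [← Ico_add_one_right_eq_Icc, hq _ _ (by omega)]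
  simp

theorem exists_mem_polyFun_interlaceSum_prod_pow_eq {n : ℕ} (d : Fin n → ℕ) :
    ∃ g ∈ polyFun (Fin (n + 1)), ∀ k, Monotone k →
      interlaceSum n k (fun l => ∏ j, (l j : ℚ) ^ d j) = g k := by
  induction n using Nat.twoStepInduction with
  | zero => exact ⟨1, one_mem _, fun k _ => by simp [interlaceSum]⟩
  | one =>
    obtain ⟨g, hg, hsum⟩ := exists_mem_polyFun_sum_Icc_pow_eq (0 : Fin 2) 1 (d 0)
    exact ⟨g, hg, fun k hk => by simp [interlaceSum, ← hsum k (hk (Fin.zero_le 1))]⟩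
  | more n ih₁ ih₂ =>
    obtain ⟨s, hs, hsum⟩ := exists_mem_polyFun_sum_Icc_pow_eq (0 : Fin (n + 3)) 1 (d 0)
    obtain ⟨g₁, hg₁, h₁⟩ := ih₂ fun j => d j.succ
    obtain ⟨g₂, hg₂, h₂⟩ := ih₁ fun j => d j.succ.succ
    have hg₁' := comp_mem_polyFun hg₁ (u := Fin.tail) fun i => coord_mem_polyFun i.succ
    have hg₂' := comp_mem_polyFun hg₂ (u := fun k => Fin.tail (Fin.tail k))
      fun i => coord_mem_polyFun i.succ.succ
    have hcoord := coord_mem_polyFun (1 : Fin (n + 3))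
    refine ⟨_, sub_mem (mul_mem hs hg₁')
      (mul_mem (mul_mem (pow_mem hcoord (d 0)) (pow_mem hcoord (d 1))) hg₂'), fun k hk => ?_⟩
    rw [interlaceSum_prod_add_two n k fun j x => (x : ℚ) ^ d j, hsum k (hk (Fin.zero_le 1)),
      h₁ _ (monotone_tail hk), h₂ _ (monotone_tail (monotone_tail hk))]
    rfl

theorem exists_mem_polyFun_interlaceSum_eq {n : ℕ} {f : (Fin n → ℤ) → ℚ}
    (hf : f ∈ polyFun (Fin n)) :
    ∃ g ∈ polyFun (Fin (n + 1)), ∀ k, Monotone k → interlaceSum n k f = g k := by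
  obtain ⟨P, hP⟩ := mem_polyFun_iff.1 hf
  obtain rfl : f = fun l => MvPolynomial.eval (fun i => (l i : ℚ)) P := funext hP
  clear hf hP
  induction P using MvPolynomial.induction_on' with
  | monomial d a =>
    obtain ⟨g, hg, h⟩ := exists_mem_polyFun_interlaceSum_prod_pow_eq d
    refine ⟨a • g, Subalgebra.smul_mem _ hg a, fun k hk => ?_⟩
    rw [Pi.smul_apply, ← h k hk, ← map_smul]
    congr 1
    funext l
    simp [MvPolynomial.eval_monomial, Finsupp.prod_fintype]
  | add P Q hP hQ =>
    obtain ⟨g, hg, hgP⟩ := hP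
    obtain ⟨h, hh, hhQ⟩ := hQ
    refine ⟨g + h, add_mem hg hh, fun k hk => ?_⟩
    rw [Pi.add_apply, ← hgP k hk, ← hhQ k hk]
    simp only [map_add]
    exact map_add (interlaceSum n k) _ _

theorem exists_mem_polyFun_sum_rowsAbove_eq {n : ℕ} {f : (Fin n → ℤ) → ℚ}
    (hf : f ∈ polyFun (Fin n)) (hf₃ : VanishesOnTriples f) :
    ∃ g ∈ polyFun (Fin (n + 1)), ∀ k, Monotone k → ∑ l ∈ rowsAbove k, f l = g k := by
  obtain ⟨g, hg, h⟩ := exists_mem_polyFun_interlaceSum_eq hf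
  exact ⟨g, hg, fun k hk => (sum_rowsAbove_eq_interlaceSum hk hf₃).trans (h k hk)⟩

/-! ### The polynomial extending the count -/

section Update

variable {ι β : Type*} [LinearOrder ι] [Preorder β] {k : ι → β} {a b : ι} {x : β}

theorem monotone_update_right_of_covBy (hk : Monotone k) (hab : a ⋖ b) (hax : k a ≤ x)
    (hxb : x ≤ k b) : Monotone (update k b x) := by
  intro i j hij
  rcases eq_or_ne j b with rfl | hj
  · rcases hij.eq_or_lt with rfl | hlt
    · rfl
    · simpa [hlt.ne] using (hk (hab.le_of_lt hlt)).trans hax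
  · rcases eq_or_ne i b with rfl | hi
    · simpa [hj] using hxb.trans (hk hij)
    · simpa [hi, hj] using hk hij

theorem monotone_update_left_of_covBy (hk : Monotone k) (hab : a ⋖ b) (hax : k a ≤ x)
    (hxb : x ≤ k b) : Monotone (update k a x) :=
  (monotone_update_right_of_covBy hk.dual hab.toDual hxb hax).dual

end Update

section WeakCount

variable {n : ℕ} {f : (Fin n → ℤ) → ℚ}

theorem vanishesOnTriples_of_eq_weakCount (hf : f ∈ polyFun (Fin n))
    (hfw : ∀ k, Monotone k → f k = weakCount k) : VanishesOnTriples f := by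
  intro a b c hab hbc k h₁ h₂
  have hzero := eq_zero_of_forall_strictMono hf (u := fun k => update (update k b (k a)) c (k a))
    (update_mem_polyFun (update_mem_polyFun coord_mem_polyFun b (coord_mem_polyFun a)) c
      (coord_mem_polyFun a)) (fun k hk => ?_) k
  · rwa [(update_eq_self_iff (f := k)).2 h₁.symm, (update_eq_self_iff (f := k)).2 h₂.symm] at hzero
  · have hac := hab.lt.trans hbc.lt
    have hmono := monotone_update_right_of_covBy hk.monotone hab le_rfl (hk hab.lt).le
    rw [hfw, weakCount_eq_zero_of_triple hab hbc, Nat.cast_zero]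
    · simp [hab.ne, hac.ne, hbc.ne]
    · simp [hab.ne, hac.ne]
    · refine monotone_update_right_of_covBy hmono hbc ?_ ?_
      · simp
      · simpa [hbc.ne'] using (hk hac).le

theorem eq_zero_of_pairs (hf : f ∈ polyFun (Fin n)) (hfw : ∀ k, Monotone k → f k = weakCount k)
    {a b c d : Fin n} (hab : a ⋖ b) (hbc : b ⋖ c) (hcd : c ⋖ d) {k : Fin n → ℤ}
    (h₁ : k b = k a) (h₂ : k c = k a + 1) (h₃ : k d = k a + 1) : f k = 0 := by
  have hzero := eq_zero_of_forall_strictMono hf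
    (u := fun k => update (update (update k b (k a)) c (k a + 1)) d (k a + 1))
    (update_mem_polyFun (update_mem_polyFun (update_mem_polyFun coord_mem_polyFun b
      (coord_mem_polyFun a)) c (coord_add_one_mem_polyFun a)) d (coord_add_one_mem_polyFun a))
      (fun k hk => ?_) k
  · rwa [(update_eq_self_iff (f := k)).2 h₁.symm, (update_eq_self_iff (f := k)).2 h₂.symm,
      (update_eq_self_iff (f := k)).2 h₃.symm] at hzero
  · have hac := hab.lt.trans hbc.lt
    have hbd := hbc.lt.trans hcd.lt
    have had := hac.trans hcd.lt
    have hmono₁ := monotone_update_right_of_covBy hk.monotone hab le_rfl (hk hab.lt).le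
    have hmono₂ : Monotone (update (update k b (k a)) c (k a + 1)) := by
      refine monotone_update_right_of_covBy hmono₁ hbc ?_ ?_
      · simp
      · simpa [hbc.ne'] using hk hac
    rw [hfw, weakCount_eq_zero_of_pairs hab hbc hcd, Nat.cast_zero]
    · simp [hab.ne, hac.ne, had.ne, hbc.ne, hbd.ne]
    · simp [hac.ne, had.ne, hcd.ne, hab.ne]
    · simp [hab.ne, hac.ne, had.ne]
    · refine monotone_update_right_of_covBy hmono₂ hcd ?_ ?_
      · simp
      · simpa [hcd.ne', hbd.ne'] using hk had

theorem eq_add_of_step (hf : f ∈ polyFun (Fin n)) (hfw : ∀ k, Monotone k → f k = weakCount k)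
    {a b : Fin n} (hab : a ⋖ b) {k : Fin n → ℤ} (h : k b = k a + 1) :
    f k = f (update k b (k a)) + f (update k a (k b)) := by
  have hu := update_mem_polyFun coord_mem_polyFun b (coord_add_one_mem_polyFun a)
  have heq := eq_of_mem_polyFun_of_forall_strictMono (comp_mem_polyFun hf hu)
    (add_mem (comp_mem_polyFun hf (update_mem_polyFun coord_mem_polyFun b (coord_mem_polyFun a)))
      (comp_mem_polyFun hf (update_mem_polyFun hu a (coord_add_one_mem_polyFun a)))) fun k hk => ?_
  · have := congrFun heq k
    rw [Pi.add_apply] at this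
    rwa [(update_eq_self_iff (f := k)).2 h.symm, ← h] at this
  · have hlt : k a + 1 ≤ k b := hk hab.lt
    have hmono := monotone_update_right_of_covBy hk.monotone hab (by omega) hlt
    rw [Pi.add_apply, hfw _ hmono, hfw, hfw, weakCount_eq_add_of_step hab]
    · simp [hab.ne]
    · simp [hab.ne]
    · refine monotone_update_left_of_covBy hmono hab ?_ ?_
      · simp [hab.ne]
      · simp
    · exact monotone_update_right_of_covBy hk.monotone hab le_rfl (hk hab.lt).le

end WeakCount

theorem exists_mem_polyFun_eq_weakCount (n : ℕ) :
    ∃ g ∈ polyFun (Fin n), ∀ k, Monotone k → g k = weakCount k := by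
  induction n with
  | zero => exact ⟨1, one_mem _, fun k _ => by simp [weakCount]⟩
  | succ n ih =>
    obtain ⟨f, hf, hfw⟩ := ih
    obtain ⟨g, hg, h⟩ :=
      exists_mem_polyFun_sum_rowsAbove_eq hf (vanishesOnTriples_of_eq_weakCount hf hfw)
    refine ⟨g, hg, fun k hk => ?_⟩
    rw [← h k hk, weakCount, Nat.cast_sum]
    exact sum_congr rfl fun l hl => hfw l (mem_rowsAbove.1 hl).2.monotone

section IsAlpha

variable {N : ℕ} {α : (Fin N → ℤ) → ℚ}

theorem IsAlpha.mem_polyFun (hα : IsAlpha N α) : α ∈ polyFun (Fin N) :=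
  let ⟨⟨P, _, hP⟩, _⟩ := hα
  mem_polyFun_iff.2 ⟨P, hP⟩

theorem IsAlpha.eq_weakCount (hα : IsAlpha N α) (k : Fin N → ℤ) (hk : Monotone k) :
    α k = weakCount k := by
  obtain ⟨g, hg, hgw⟩ := exists_mem_polyFun_eq_weakCount N
  have hαg : α = g :=
    eq_of_mem_polyFun_of_forall_strictMono hα.mem_polyFun hg fun k hk => by
      rw [hα.2 k hk, Set.ncard, encard_MTset hk, ENat.toNat_natCast, hgw k hk.monotone]
  rw [hαg, hgw k hk]

theorem alpha_repeat_pair_general (hα : IsAlpha N α) {a b c d : Fin N} (hab : a ⋖ b)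
    (hbc : b ⋖ c) (hcd : c ⋖ d) {k : Fin N → ℤ} (hb : k b = k a + 1) (hc : k c = k a)
    (hd : k d = k a + 1) : α k = α (update (update k a (k b)) d (k c)) := by
  have step {i j : Fin N} (hij : i ⋖ j) {k : Fin N → ℤ} (h : k j = k i + 1) :
      α k = α (update k j (k i)) + α (update k i (k j)) :=
    eq_add_of_step hα.mem_polyFun hα.eq_weakCount hij h
  have triple := vanishesOnTriples_of_eq_weakCount hα.mem_polyFun hα.eq_weakCount
  have hac := (hab.lt.trans hbc.lt).ne
  have hbd := (hbc.lt.trans hcd.lt).ne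
  have had := (hab.lt.trans (hbc.lt.trans hcd.lt)).ne
  have hlow : α (update k b (k a)) = 0 := by
    rw [step hcd, triple hab hbc, eq_zero_of_pairs hα.mem_polyFun hα.eq_weakCount hab hbc hcd]
    all_goals
      simp [hab.ne, hac, had, hbc.ne, hbc.ne', hbd, hbd.symm, hcd.ne, hcd.ne', hc, hd]
  have hhigh : α (update k a (k b)) = α (update (update k a (k b)) d (k c)) := by
    rw [step hcd, triple (k := update _ c _) hab hbc]
    all_goals simp [hab.ne', hac, hac.symm, had.symm, hbc.ne, hb, hc, hd]
  rw [step hab hb, hlow, hhigh, zero_add]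

end IsAlpha

/-- For every `n ≥ 2` and every `1 ≤ i ≤ n - 1`,
`α(n+2; 1,…,i-1,i,i+1,i,i+1,i+2,…,n) = α(n+2; 1,…,i-1,i+1,i+1,i,i,i+2,…,n)`. -/
theorem alpha_repeat_pair (n : ℕ) (hn : 2 ≤ n) (i : ℕ) (hi1 : 1 ≤ i) (hi2 : i ≤ n - 1)
    (α : (Fin (n + 2) → ℤ) → ℚ) (hα : IsAlpha (n + 2) α) :
    α (fun t => if t.1 ≤ i then (t.1 : ℤ) + 1
        else if t.1 = i + 1 then (i : ℤ)
        else if t.1 = i + 2 then (i : ℤ) + 1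
        else (t.1 : ℤ) - 1) =
    α (fun t => if t.1 + 2 ≤ i then (t.1 : ℤ) + 1
        else if t.1 = i - 1 ∨ t.1 = i then (i : ℤ) + 1
        else if t.1 = i + 1 ∨ t.1 = i + 2 then (i : ℤ)
        else (t.1 : ℤ) - 1) := by
  have adjacent (j : ℕ) (hj : j + 1 < n + 2) :
      (⟨j, by omega⟩ : Fin (n + 2)) ⋖ ⟨j + 1, hj⟩ := by simp [Fin.covBy_iff]
  obtain ⟨i, rfl⟩ := Nat.exists_eq_add_of_le' hi1
  rw [alpha_repeat_pair_general hα (adjacent i (by omega)) (adjacent (i + 1) (by omega))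
    (adjacent (i + 2) (by omega))]
  · congr 1
    funext t
    simp only [update_apply, Fin.ext_iff]
    grind
  all_goals grind
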